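/- Let ε,b > 0 and let c:(−ε,b) → ℝ^{n+2} be smooth with ⟨c(t),c(t)⟩ = 0, c(t) ≠ 0 and ⟨c′(t),c′(t)⟩ = 1 for all t. Let λ ∈ ℝ with 2λ > 1, fix p ∈ (0,b), and let T:(0,b) → End(ℝ^{n+2}) be differentiable with T(p) = id and T′(t) = (λ/t²)·(T(t)∘(c(t)∧c′(t))) for all t ∈ (0,b). Then: (i) the curve γ(t) := T(t)(c(t)) does not converge projectively as t → 0⁺ (for no nonzero x ∈ ℝ^{n+2} and choice of nonzero reals r(t) does r(t)·γ(t) → x); and (ii) there is a 3-dimensional linear subspace W ⊆ ℝ^{n+2}, on which the Minkowski form is nondegenerate of signature (2,1), such that a nonzero vector x ∈ ℝ^{n+2} is a projective accumulation point of γ at 0 if and only if x ∈ W and ⟨x,x⟩ = 0 (a limit circle). -/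

import Mathlib

open scoped BigOperators Topology
open Filter Set MeasureTheory

noncomputable section

abbrev E (n : ℕ) := EuclideanSpace ℝ (Fin (n + 2))

/-- Minkowski inner product of signature (n+1,1). -/
def mink {n : ℕ} (x y : E n) : ℝ :=
  ∑ i, (if i = Fin.last (n + 1) then (-1 : ℝ) else 1) * x i * y i

variable {n : ℕ}

lemma mink_comm (x y : E n) : mink x y = mink y x :=
  Finset.sum_congr rfl fun i _ => by ring

lemma mink_add_right (v x y : E n) : mink v (x + y) = mink v x + mink v y := by
  simp [mink, mul_add, Finset.sum_add_distrib]

lemma mink_smul_right (v : E n) (c : ℝ) (x : E n) : mink v (c • x) = c * mink v x := by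
  unfold mink
  rw [Finset.mul_sum]
  refine Finset.sum_congr rfl fun i _ => ?_
  simp only [PiLp.smul_apply, smul_eq_mul]
  ring

lemma mink_add_left (x y v : E n) : mink (x + y) v = mink x v + mink y v := by
  rw [mink_comm, mink_add_right, mink_comm v x, mink_comm v y]

lemma mink_smul_left (c : ℝ) (x v : E n) : mink (c • x) v = c * mink x v := by
  rw [mink_comm, mink_smul_right, mink_comm v x]

/-- `v ∧ w` as an endomorphism: `x ↦ ⟨v,x⟩ w − ⟨w,x⟩ v`. -/
def wedge {n : ℕ} (v w : E n) : E n →L[ℝ] E n :=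
  LinearMap.toContinuousLinearMap
    { toFun := fun x => mink v x • w - mink w x • v
      map_add' := by
        intro x y
        simp only [mink_add_right, add_smul]
        abel
      map_smul' := by
        intro c x
        simp only [mink_smul_right, RingHom.id_apply, mul_smul, smul_sub] }

/-- rank one endomorphism `vw* : x ↦ ⟨x,w⟩ v`. -/
def rankOne {n : ℕ} (v w : E n) : E n →L[ℝ] E n :=
  LinearMap.toContinuousLinearMap
    { toFun := fun x => mink x w • v
      map_add' := by
        intro x y
        simp only [mink_add_left, add_smul]
      map_smul' := by
        intro c x
        simp only [mink_smul_left, RingHom.id_apply, mul_smul] }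

/-- A nonzero `x` is a projective accumulation point at `0` of a curve
`γ : (0,b) → ℝ^{n+2} ∖ {0}` if some sequence `tᵢ → 0⁺` in `(0,b)` and reals `rᵢ`
satisfy `rᵢ • γ (tᵢ) → x`. -/
def projAccum {n : ℕ} (b : ℝ) (γ : ℝ → E n) (x : E n) : Prop :=
  ∃ (ts : ℕ → ℝ) (rs : ℕ → ℝ), (∀ i, ts i ∈ Set.Ioo (0:ℝ) b) ∧
    Tendsto ts atTop (𝓝 0) ∧ Tendsto (fun i => rs i • γ (ts i)) atTop (𝓝 x)


lemma lim_aux (p M : ℝ) (hp : 0 < p) (f f' : ℝ → ℝ)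
    (hf : ∀ t ∈ Set.Ioc (0:ℝ) p, HasDerivAt f (f' t) t)
    (hM : ∀ t ∈ Set.Ioc (0:ℝ) p, t * (f' t) ^ 2 ≤ M) :
    ∃ l, Tendsto f (𝓝[>] 0) (𝓝 l) := by
  have hlip : LipschitzOnWith (Real.toNNReal (2 * √M)) (fun s => f (s ^ 2)) (Set.Ioc 0 (√p)) := by
    have hmem : ∀ s ∈ Set.Ioc (0:ℝ) (√p), s ^ 2 ∈ Set.Ioc (0:ℝ) p := by
      intro s hs
      refine ⟨by have := hs.1; positivity, ?_⟩
      exact (Real.le_sqrt hs.1.le hp.le).1 hs.2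
    refine Convex.lipschitzOnWith_of_nnnorm_hasDerivWithin_le (𝕜 := ℝ)
      (f' := fun s => f' (s ^ 2) * (2 * s)) (convex_Ioc _ _) ?_ ?_
    · intro s hs
      have h1 : HasDerivAt (fun s : ℝ => s ^ 2) (2 * s) s := by
        simpa using hasDerivAt_pow 2 s
      exact (HasDerivAt.comp (h₂ := f) (h := fun s : ℝ => s ^ 2) s (hf _ (hmem s hs)) h1).hasDerivWithinAt
    · intro s hs
      rw [← NNReal.coe_le_coe, coe_nnnorm, Real.coe_toNNReal _ (by positivity), Real.norm_eq_abs]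
      have h2 := hM _ (hmem s hs)
      have h3 : |f' (s ^ 2) * (2 * s)| = 2 * |s * f' (s ^ 2)| := by
        rw [show f' (s ^ 2) * (2 * s) = 2 * (s * f' (s ^ 2)) by ring, abs_mul]; norm_num
      rw [h3]
      have : |s * f' (s ^ 2)| ≤ √M := by
        apply Real.abs_le_sqrt
        rw [mul_pow]; exact h2
      linarith
  obtain ⟨g, hg, hE⟩ := hlip.extend_real
  refine ⟨g 0, ?_⟩
  have h1 : Tendsto (fun t => g (√t)) (𝓝[>] 0) (𝓝 (g 0)) := by
    have : Continuous (fun t => g (√t)) := hg.continuous.comp Real.continuous_sqrt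
    have h := this.tendsto 0
    simp only [Real.sqrt_zero] at h
    exact h.mono_left nhdsWithin_le_nhds
  refine h1.congr' ?_
  filter_upwards [Ioc_mem_nhdsGT hp] with t ht
  have := hE (x := √t) ⟨Real.sqrt_pos.2 ht.1, Real.sqrt_le_sqrt ht.2⟩
  simp only [Real.sq_sqrt ht.1.le] at this
  exact this.symm

set_option maxHeartbeats 2000000 in
lemma key (p lam w C : ℝ) (hp : 0 < p) (hw : 0 < w) (hwl : w ^ 2 = 2 * lam - 1) (hC : 0 ≤ C)
    (a0 a1 a2 a3 Z N' : ℝ → ℝ)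
    (h0 : ∀ t ∈ Set.Ioc (0:ℝ) p, HasDerivAt a0 (a1 t) t)
    (h1 : ∀ t ∈ Set.Ioc (0:ℝ) p, HasDerivAt a1 (a2 t - lam / t ^ 2 * a0 t) t)
    (h2 : ∀ t ∈ Set.Ioc (0:ℝ) p, HasDerivAt a2 (a3 t - lam / t ^ 2 * a1 t) t)
    (hN : ∀ t ∈ Set.Ioc (0:ℝ) p, HasDerivAt (fun t => Z t ^ 2) (N' t) t)
    (hZ : ∀ t, 0 ≤ Z t)
    (hN' : ∀ t ∈ Set.Ioc (0:ℝ) p, |N' t| ≤ C / t ^ 2 * Z t * (|a0 t| + |a1 t|))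
    (h3 : ∀ t ∈ Set.Ioc (0:ℝ) p, |a3 t| ≤ C * Z t) :
    (∃ l, Tendsto (fun t => lam * a0 t / t - a1 t + t * a2 t) (𝓝[>] 0) (𝓝 l)) ∧
    (∃ l, Tendsto (fun t => (w * (a0 t / t) - (lam * a0 t / t - a1 t + t * a2 t) / w)
        * Real.cos (w * Real.log t) - (a1 t - a0 t / t) * Real.sin (w * Real.log t))
        (𝓝[>] 0) (𝓝 l)) ∧
    (∃ l, Tendsto (fun t => (w * (a0 t / t) - (lam * a0 t / t - a1 t + t * a2 t) / w)
        * Real.sin (w * Real.log t) + (a1 t - a0 t / t) * Real.cos (w * Real.log t))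
        (𝓝[>] 0) (𝓝 l)) := by
  have hlam : lam = (w ^ 2 + 1) / 2 := by linarith
  set h : ℝ → ℝ := fun t => lam * a0 t / t - a1 t + t * a2 t with hh
  set B : ℝ → ℝ := fun t => w * (a0 t / t) - h t / w with hB
  set f : ℝ → ℝ := fun t => a1 t - a0 t / t with hf
  have dq : ∀ t ∈ Set.Ioc (0:ℝ) p, HasDerivAt (fun t => a0 t / t) (f t / t) t := by
    intro t ht
    have ht0 : t ≠ 0 := ht.1.ne'
    refine ((h0 t ht).div (hasDerivAt_id t) ht0).congr_deriv ?_
    simp only [hf, id]; field_simp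
  have dh : ∀ t ∈ Set.Ioc (0:ℝ) p, HasDerivAt h (t * a3 t) t := by
    intro t ht
    have ht0 : t ≠ 0 := ht.1.ne'
    have := ((((dq t ht).const_mul lam).sub (h1 t ht)).add ((hasDerivAt_id t).mul (h2 t ht)))
    refine (this.congr_deriv ?_).congr_of_eventuallyEq ?_
    · simp only [hf, id]; field_simp; ring
    · exact Eventually.of_forall fun s => by simp [hh]; ring
  have dB : ∀ t ∈ Set.Ioc (0:ℝ) p, HasDerivAt B (w * (f t / t) - t * a3 t / w) t := by
    intro t ht
    exact ((dq t ht).const_mul w).sub ((dh t ht).div_const w)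
  have df : ∀ t ∈ Set.Ioc (0:ℝ) p, HasDerivAt f (- w * B t / t) t := by
    intro t ht
    have ht0 : t ≠ 0 := ht.1.ne'
    refine ((h1 t ht).sub (dq t ht)).congr_deriv ?_
    simp only [hB, hh, hf, hlam]; field_simp; ring
  have dth : ∀ t ∈ Set.Ioc (0:ℝ) p, HasDerivAt (fun t => w * Real.log t) (w / t) t := by
    intro t ht
    exact (Real.hasDerivAt_log ht.1.ne').const_mul w
  have dP : ∀ t ∈ Set.Ioc (0:ℝ) p, HasDerivAt (fun t => B t * Real.cos (w * Real.log t) -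
      f t * Real.sin (w * Real.log t)) (- (t * a3 t / w) * Real.cos (w * Real.log t)) t := by
    intro t ht
    have ht0 : t ≠ 0 := ht.1.ne'
    refine (((dB t ht).mul (dth t ht).cos).sub ((df t ht).mul (dth t ht).sin)).congr_deriv ?_
    field_simp; ring
  have dQ : ∀ t ∈ Set.Ioc (0:ℝ) p, HasDerivAt (fun t => B t * Real.sin (w * Real.log t) +
      f t * Real.cos (w * Real.log t)) (- (t * a3 t / w) * Real.sin (w * Real.log t)) t := by
    intro t ht
    have ht0 : t ≠ 0 := ht.1.ne'
    refine (((dB t ht).mul (dth t ht).sin).add ((df t ht).mul (dth t ht).cos)).congr_deriv ?_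
    field_simp; ring
  -- energy
  set V : ℝ → ℝ := fun t => h t ^ 2 + B t ^ 2 + f t ^ 2 + t ^ 3 * Z t ^ 2 with hV
  have dV : ∀ t ∈ Set.Ioc (0:ℝ) p, HasDerivAt V (2 * h t * (t * a3 t) - 2 * B t * (t * a3 t / w)
      + 3 * t ^ 2 * Z t ^ 2 + t ^ 3 * N' t) t := by
    intro t ht
    have ht0 : t ≠ 0 := ht.1.ne'
    have h3 : HasDerivAt (fun s : ℝ => s ^ 3) (3 * t ^ 2) t := by
      simpa using hasDerivAt_pow 3 t
    refine (((((dh t ht).pow 2).add ((dB t ht).pow 2)).add ((df t ht).pow 2)).add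
      (h3.mul (hN t ht))).congr_deriv ?_
    push_cast
    field_simp; ring
  obtain ⟨D, hD0, hD⟩ : ∃ D : ℝ, 0 ≤ D ∧ ∀ t ∈ Set.Ioc (0:ℝ) p,
      |a0 t| + |a1 t| ≤ D * (|h t| + |B t| + |f t|) := by
    set e := 1 / w + 1 / w ^ 2 with he
    have he0 : 0 < e := by positivity
    refine ⟨p * e + e + 1, by positivity, fun t ht => ?_⟩
    have hq : |a0 t / t| ≤ e * (|h t| + |B t|) := by
      have e1 : a0 t / t = (1 / w) * B t + (1 / w ^ 2) * h t := by
        simp only [hB]; field_simp; ring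
      rw [e1]
      refine (abs_add_le _ _).trans ?_
      rw [abs_mul, abs_mul, abs_of_pos (by positivity : 0 < 1 / w),
        abs_of_pos (by positivity : 0 < 1 / w ^ 2), he]
      have i1 : 0 < 1 / w := by positivity
      have i2 : 0 < 1 / w ^ 2 := by positivity
      nlinarith [mul_nonneg i1.le (abs_nonneg (h t)), mul_nonneg i2.le (abs_nonneg (B t))]
    have hA0 : |a0 t| ≤ p * |a0 t / t| := by
      have : a0 t = t * (a0 t / t) := by have := ht.1.ne'; field_simp
      conv_lhs => rw [this]
      rw [abs_mul, abs_of_pos ht.1]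
      exact mul_le_mul_of_nonneg_right ht.2 (abs_nonneg _)
    have hA1 : |a1 t| ≤ |f t| + |a0 t / t| := by
      have : a1 t = f t + a0 t / t := by simp [hf]
      conv_lhs => rw [this]
      exact abs_add_le _ _
    have i1 := mul_le_mul_of_nonneg_left hq hp.le
    have i2 : 0 ≤ p * e * |f t| := by positivity
    have i3 : 0 ≤ e * |f t| := by positivity
    nlinarith [abs_nonneg (h t), abs_nonneg (B t)]
  set L := 2 * C + 2 * C / w + C * D with hL
  have hL0 : 0 ≤ L := by positivity
  have hVb : ∀ t ∈ Set.Ioc (0:ℝ) p, 0 ≤ (2 * h t * (t * a3 t) - 2 * B t * (t * a3 t / w)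
      + 3 * t ^ 2 * Z t ^ 2 + t ^ 3 * N' t) + L ^ 2 * V t := by
    intro t ht
    have htp := ht.1
    set s := t * Z t with hs
    have hs0 : 0 ≤ s := mul_nonneg htp.le (hZ t)
    set X := |h t| + |B t| + |f t| with hX
    have hX0 : 0 ≤ X := by positivity
    have hta : |t * a3 t| ≤ C * s := by
      rw [abs_mul, abs_of_pos htp, hs]
      nlinarith [h3 t ht]
    have j1 : |2 * h t * (t * a3 t)| ≤ 2 * C * (X * s) := by
      rw [abs_mul, abs_mul, abs_two]
      have : |h t| ≤ X := by simp only [hX]; linarith [abs_nonneg (B t), abs_nonneg (f t)]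
      have := mul_le_mul this hta (abs_nonneg _) hX0
      nlinarith
    have j2 : |2 * B t * (t * a3 t / w)| ≤ 2 * C / w * (X * s) := by
      rw [abs_mul, abs_mul, abs_two, abs_div, abs_of_pos hw]
      have : |B t| ≤ X := by simp only [hX]; linarith [abs_nonneg (h t), abs_nonneg (f t)]
      have := mul_le_mul this hta (abs_nonneg _) hX0
      have e1 : 2 * |B t| * (|t * a3 t| / w) = 2 * (|B t| * |t * a3 t|) / w := by ring
      have e2 : 2 * C / w * (X * s) = 2 * (X * (C * s)) / w := by ring
      rw [e1, e2]
      gcongr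
    have j3 : |t ^ 3 * N' t| ≤ C * D * (X * s) := by
      rw [abs_mul, abs_of_pos (by positivity : 0 < t ^ 3)]
      calc t ^ 3 * |N' t| ≤ t ^ 3 * (C / t ^ 2 * Z t * (D * X)) := by
            have := hD t ht
            have hz := hZ t
            have := hN' t ht
            gcongr
            refine this.trans ?_
            gcongr
        _ = C * D * (X * s) := by
            have := htp.ne'
            simp only [hs]; field_simp
    have j4 : X ^ 2 ≤ 3 * V t := by
      have : 0 ≤ t ^ 3 * Z t ^ 2 := by positivity
      have q1 := sq_abs (h t); have q2 := sq_abs (B t); have q3 := sq_abs (f t)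
      simp only [hV, hX]
      nlinarith [sq_nonneg (|h t| - |B t|), sq_nonneg (|h t| - |f t|), sq_nonneg (|B t| - |f t|)]
    have k1 := neg_abs_le (2 * h t * (t * a3 t))
    have k2 := le_abs_self (2 * B t * (t * a3 t / w))
    have k3 := neg_abs_le (t ^ 3 * N' t)
    have k4 : 3 * t ^ 2 * Z t ^ 2 = 3 * s ^ 2 := by simp only [hs]; ring
    rw [k4]
    have k5 : L * (X * s) = 2 * C * (X * s) + 2 * C / w * (X * s) + C * D * (X * s) := by
      rw [hL]; ring
    have k6 : L ^ 2 * X ^ 2 ≤ 3 * (L ^ 2 * V t) := by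
      have := mul_le_mul_of_nonneg_left j4 (sq_nonneg L); linarith
    have k7 : L * (X * s) ≤ L ^ 2 * X ^ 2 / 4 + s ^ 2 := by
      have := sq_nonneg (L * X - 2 * s)
      ring_nf at this ⊢
      linarith
    have k8 : 0 ≤ L ^ 2 * X ^ 2 := by positivity
    have k9 := sq_nonneg s
    linarith
  have hmono : MonotoneOn (fun t => V t * Real.exp (L ^ 2 * t)) (Set.Ioc 0 p) := by
    have dW : ∀ t ∈ Set.Ioc (0:ℝ) p, HasDerivAt (fun t => V t * Real.exp (L ^ 2 * t))
      (((2 * h t * (t * a3 t) - 2 * B t * (t * a3 t / w)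
      + 3 * t ^ 2 * Z t ^ 2 + t ^ 3 * N' t) + L ^ 2 * V t) * Real.exp (L ^ 2 * t)) t := by
      intro t ht
      have he : HasDerivAt (fun t => L ^ 2 * t) (L ^ 2) t := by
        simpa using (hasDerivAt_id t).const_mul (L ^ 2)
      refine ((dV t ht).mul he.exp).congr_deriv ?_
      ring
    refine monotoneOn_of_deriv_nonneg (convex_Ioc _ _)
      (fun t ht => (dW t ht).continuousAt.continuousWithinAt) ?_ ?_
    · intro t ht
      exact (dW t (interior_subset ht)).differentiableAt.differentiableWithinAt
    · intro t ht
      rw [(dW t (interior_subset ht)).deriv]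
      exact mul_nonneg (hVb t (interior_subset ht)) (Real.exp_pos _).le
  set M := V p * Real.exp (L ^ 2 * p) with hM
  have hVM : ∀ t ∈ Set.Ioc (0:ℝ) p, t ^ 3 * Z t ^ 2 ≤ M := by
    intro t ht
    have hm : V t * Real.exp (L ^ 2 * t) ≤ M := hmono ht ⟨hp, le_refl p⟩ ht.2
    have e1 : 1 ≤ Real.exp (L ^ 2 * t) := Real.one_le_exp (by have := ht.1; positivity)
    have hV0 : t ^ 3 * Z t ^ 2 ≤ V t := by simp only [hV]; linarith [sq_nonneg (h t), sq_nonneg (B t), sq_nonneg (f t)]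
    have : 0 ≤ t ^ 3 * Z t ^ 2 := by have := ht.1; positivity
    have h5 : V t * 1 ≤ V t * Real.exp (L ^ 2 * t) :=
      mul_le_mul_of_nonneg_left e1 (this.trans hV0)
    linarith
  have hta : ∀ t ∈ Set.Ioc (0:ℝ) p, t * (t * a3 t) ^ 2 ≤ C ^ 2 * M := by
    intro t ht
    have i1 : a3 t ^ 2 ≤ (C * Z t) ^ 2 := sq_le_sq' (by linarith [neg_abs_le (a3 t), h3 t ht])
      ((le_abs_self _).trans (h3 t ht))
    calc t * (t * a3 t) ^ 2 = t ^ 3 * a3 t ^ 2 := by ring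
      _ ≤ t ^ 3 * (C * Z t) ^ 2 := by have := ht.1; gcongr
      _ = C ^ 2 * (t ^ 3 * Z t ^ 2) := by ring
      _ ≤ _ := by have := hVM t ht; gcongr
  have hta2 : ∀ t ∈ Set.Ioc (0:ℝ) p, ∀ k : ℝ, k ^ 2 ≤ 1 →
      t * (-(t * a3 t / w) * k) ^ 2 ≤ C ^ 2 * M / w ^ 2 := by
    intro t ht k hk
    have := hta t ht
    have h0 : 0 ≤ t * (t * a3 t) ^ 2 := by have := ht.1; positivity
    rw [le_div_iff₀ (by positivity)]
    have e : t * (-(t * a3 t / w) * k) ^ 2 * w ^ 2 = (t * (t * a3 t) ^ 2) * k ^ 2 := by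
      field_simp
    rw [e]
    nlinarith
  refine ⟨lim_aux p _ hp _ _ dh hta, lim_aux p _ hp _ _ dP fun t ht => hta2 t ht _ ?_,
    lim_aux p _ hp _ _ dQ fun t ht => hta2 t ht _ ?_⟩
  · exact Real.cos_sq_le_one _
  · exact Real.sin_sq_le_one _

def Jm {n : ℕ} : E n →L[ℝ] E n :=
  LinearMap.toContinuousLinearMap
    { toFun := fun x => WithLp.toLp 2 fun i => (if i = Fin.last (n + 1) then (-1 : ℝ) else 1) * x i
      map_add' := by
        intro x y; ext i; simp [mul_add]
      map_smul' := by
        intro c x; ext i; simp }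

lemma Jm_apply {n : ℕ} (x : E n) (i : Fin (n + 2)) :
    Jm x i = (if i = Fin.last (n + 1) then (-1 : ℝ) else 1) * x i := rfl

lemma mink_eq {n : ℕ} (x y : E n) : mink x y = inner ℝ (Jm x) y := by
  simp only [mink, PiLp.inner_apply, Jm_apply]
  refine Finset.sum_congr rfl fun i _ => ?_
  simp; ring

lemma Jm_Jm {n : ℕ} (x : E n) : Jm (Jm x) = x := by
  ext i; simp only [Jm_apply]; split_ifs <;> simp

lemma Jm_symm {n : ℕ} (x y : E n) : inner ℝ (Jm x) y = inner ℝ x (Jm y) := by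
  rw [← mink_eq, mink_comm, mink_eq, real_inner_comm]

lemma wedge_apply {n : ℕ} (v w x : E n) : wedge v w x = mink v x • w - mink w x • v := rfl

lemma mink_tendsto {n : ℕ} {α : Type*} {l : Filter α} {f g : α → E n} {x y : E n}
    (hf : Tendsto f l (𝓝 x)) (hg : Tendsto g l (𝓝 y)) :
    Tendsto (fun a => mink (f a) (g a)) l (𝓝 (mink x y)) := by
  simp only [mink_eq]
  exact ((Jm.continuous.tendsto x).comp hf).inner hg

lemma mink_deriv {n : ℕ} {f g : ℝ → E n} {f' g' : E n} {t : ℝ}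
    (hf : HasDerivAt f f' t) (hg : HasDerivAt g g' t) :
    HasDerivAt (fun a => mink (f a) (g a)) (mink (f t) g' + mink f' (g t)) t := by
  simp only [mink_eq]
  exact (Jm.hasFDerivAt.comp_hasDerivAt t hf).inner ℝ hg

lemma adj_wedge {n : ℕ} (v w z : E n) : (ContinuousLinearMap.adjoint (wedge v w)) z
    = (inner ℝ z w : ℝ) • Jm v - (inner ℝ z v : ℝ) • Jm w := by
  refine ext_inner_right ℝ fun x => ?_
  rw [ContinuousLinearMap.adjoint_inner_left, wedge_apply, inner_sub_right, inner_sub_left,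
    inner_smul_right, inner_smul_right, inner_smul_left, inner_smul_left, mink_eq, mink_eq]
  simp; ring

lemma adj_deriv {n : ℕ} {T : ℝ → E n →L[ℝ] E n} {a t : ℝ} {v w : E n}
    (hT : HasDerivAt T (a • (T t * wedge v w)) t) (y : E n) :
    HasDerivAt (fun t => ContinuousLinearMap.adjoint (T t) y)
      (a • ((inner ℝ (ContinuousLinearMap.adjoint (T t) y) w : ℝ) • Jm v
        - (inner ℝ (ContinuousLinearMap.adjoint (T t) y) v : ℝ) • Jm w)) t := by
  have h := (hT.star).clm_apply (hasDerivAt_const t y)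
  simp only [ContinuousLinearMap.star_eq_adjoint, map_zero, add_zero] at h
  refine h.congr_deriv ?_
  rw [← adj_wedge, ← ContinuousLinearMap.star_eq_adjoint, star_smul, star_mul]
  simp [ContinuousLinearMap.star_eq_adjoint]

/-- T is a Minkowski isometry -/
lemma T_isom {n : ℕ} (b : ℝ) (c c1 : ℝ → E n) (a : ℝ → ℝ)
    (p : ℝ) (hp : p ∈ Set.Ioo (0:ℝ) b)
    (T : ℝ → E n →L[ℝ] E n) (hTp : T p = 1)
    (hT : ∀ t ∈ Set.Ioo (0:ℝ) b, HasDerivAt T (a t • (T t * wedge (c t) (c1 t))) t)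
    (t : ℝ) (ht : t ∈ Set.Ioo (0:ℝ) b) (x y : E n) :
    mink (T t x) (T t y) = mink x y := by
  have hadj : ∀ x y, mink (ContinuousLinearMap.adjoint (T t) x)
      (ContinuousLinearMap.adjoint (T t) y) = mink x y := by
    intro x y
    have hd : ∀ t ∈ Set.Ioo (0:ℝ) b, HasDerivAt (fun t =>
        mink (ContinuousLinearMap.adjoint (T t) x) (ContinuousLinearMap.adjoint (T t) y)) 0 t := by
      intro t ht
      refine (mink_deriv (adj_deriv (hT t ht) x) (adj_deriv (hT t ht) y)).congr_deriv ?_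
      set zx := ContinuousLinearMap.adjoint (T t) x
      set zy := ContinuousLinearMap.adjoint (T t) y
      simp only [mink_eq, map_smul, map_sub, Jm_Jm, inner_smul_left, inner_smul_right,
        inner_sub_left, inner_sub_right, Jm_symm zx]
      simp only [conj_trivial, real_inner_comm zy]
      ring
    have := (isOpen_Ioo (a := (0:ℝ)) (b := b)).is_const_of_deriv_eq_zero isPreconnected_Ioo
      (fun s hs => (hd s hs).differentiableAt.differentiableWithinAt)
      (fun s hs => (hd s hs).deriv) ht hp
    simp only [hTp] at this
    rw [this, ← ContinuousLinearMap.star_eq_adjoint, star_one]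
    simp
  set S := ContinuousLinearMap.adjoint (T t) with hS
  have h1 : T t * (Jm * S * Jm) = 1 := by
    ext1 x
    refine ext_inner_right ℝ fun y => ?_
    simp only [mul_apply_eq_comp, one_apply_eq_self]
    rw [← ContinuousLinearMap.adjoint_inner_right, ← mink_eq, hadj, mink_eq, Jm_Jm]
  have h2 : (Jm * S * Jm) * T t = 1 := by
    have h3 : (T t : E n →ₗ[ℝ] E n) * ((Jm * S * Jm : E n →L[ℝ] E n) : E n →ₗ[ℝ] E n) = 1 := by
      ext1 x
      exact congrArg (fun f : E n →L[ℝ] E n => f x) h1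
    have h4 := mul_eq_one_comm.1 h3
    ext1 x
    exact congrArg (fun f : E n →ₗ[ℝ] E n => f x) h4
  have h5 : Jm (S (Jm (T t x))) = x := congrArg (fun f : E n →L[ℝ] E n => f x) h2
  rw [mink_eq, ← ContinuousLinearMap.adjoint_inner_left, ← hS, mink_eq]
  rw [← Jm_Jm (S (Jm (T t x))), h5]

lemma endgame {n : ℕ} (b w : ℝ) (hb : 0 < b) (hw : 0 < w) (γ h P Q : ℝ → E n) (u₁ u₂ u₃ : E n)
    (hh : Tendsto h (𝓝[>] 0) (𝓝 u₃)) (hP : Tendsto P (𝓝[>] 0) (𝓝 u₁))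
    (hQ : Tendsto Q (𝓝[>] 0) (𝓝 u₂))
    (m11 : mink u₁ u₁ = 1) (m22 : mink u₂ u₂ = 1) (m33 : mink u₃ u₃ = -1)
    (m12 : mink u₁ u₂ = 0) (m13 : mink u₁ u₃ = 0) (m23 : mink u₂ u₃ = 0)
    (hγ : ∀ t ∈ Set.Ioo (0:ℝ) b, γ t = (t / w) • (h t + (Real.cos (w * Real.log t) • P t +
      Real.sin (w * Real.log t) • Q t))) :
    (¬ ∃ x : E n, x ≠ 0 ∧ ∃ r : ℝ → ℝ, (∀ t ∈ Set.Ioo (0:ℝ) b, r t ≠ 0) ∧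
        Tendsto (fun t : ℝ => r t • γ t) (𝓝[>] 0) (𝓝 x)) ∧
    ∃ (u₁ u₂ u₃ : E n) (W : Submodule ℝ (E n)),
      W = Submodule.span ℝ ({u₁, u₂, u₃} : Set (E n)) ∧
      Module.finrank ℝ W = 3 ∧
      mink u₁ u₁ = 1 ∧ mink u₂ u₂ = 1 ∧ mink u₃ u₃ = -1 ∧
      mink u₁ u₂ = 0 ∧ mink u₁ u₃ = 0 ∧ mink u₂ u₃ = 0 ∧
      ∀ x : E n, x ≠ 0 →
        (projAccum b γ x ↔ (x ∈ W ∧ mink x x = 0)) := by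
  have m31 : mink u₃ u₁ = 0 := by rw [mink_comm, m13]
  have m32 : mink u₃ u₂ = 0 := by rw [mink_comm, m23]
  have m21 : mink u₂ u₁ = 0 := by rw [mink_comm, m12]
  set g : ℝ → E n := fun θ => u₃ + (Real.cos θ • u₁ + Real.sin θ • u₂) with hg
  set G : ℝ → E n := fun t => h t + (Real.cos (w * Real.log t) • P t +
      Real.sin (w * Real.log t) • Q t) with hG
  have hgu : ∀ θ, mink (g θ) u₃ = -1 := by
    intro θ
    simp [hg, mink_add_left, mink_smul_left, m33, m13, m23]
  have hgg : ∀ θ, mink (g θ) (g θ) = 0 := by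
    intro θ
    simp only [hg, mink_add_left, mink_smul_left, mink_add_right, mink_smul_right, m11, m22, m33,
      m12, m13, m23, m31, m32, m21]
    nlinarith [Real.sin_sq_add_cos_sq θ]
  -- difference tends to zero
  have hdiff : Tendsto (fun t => G t - g (w * Real.log t)) (𝓝[>] 0) (𝓝 0) := by
    have e : (fun t => G t - g (w * Real.log t)) = fun t => (h t - u₃) +
        (Real.cos (w * Real.log t) • (P t - u₁) + Real.sin (w * Real.log t) • (Q t - u₂)) := by
      funext t; simp only [hG, hg, smul_sub]; abel
    rw [e]
    have h1 : Tendsto (fun t => h t - u₃) (𝓝[>] 0) (𝓝 0) := by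
      simpa using hh.sub_const u₃
    have h2 : Tendsto (fun t => P t - u₁) (𝓝[>] 0) (𝓝 0) := by
      simpa using hP.sub_const u₁
    have h3 : Tendsto (fun t => Q t - u₂) (𝓝[>] 0) (𝓝 0) := by
      simpa using hQ.sub_const u₂
    have h2' : Tendsto (fun t => Real.cos (w * Real.log t) • (P t - u₁)) (𝓝[>] 0) (𝓝 0) := by
      refine squeeze_zero_norm (fun t => ?_) (tendsto_zero_iff_norm_tendsto_zero.1 h2)
      rw [norm_smul]
      exact mul_le_of_le_one_left (norm_nonneg _) (Real.abs_cos_le_one _)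
    have h3' : Tendsto (fun t => Real.sin (w * Real.log t) • (Q t - u₂)) (𝓝[>] 0) (𝓝 0) := by
      refine squeeze_zero_norm (fun t => ?_) (tendsto_zero_iff_norm_tendsto_zero.1 h3)
      rw [norm_smul]
      exact mul_le_of_le_one_left (norm_nonneg _) (Real.abs_sin_le_one _)
    simpa using h1.add (h2'.add h3')
  -- general convergence principle along a filter
  have conv : ∀ {α : Type} (l : Filter α) (ts ρ : α → ℝ) (x : E n),
      Tendsto ts l (𝓝[>] 0) → Tendsto (fun i => ρ i • γ (ts i)) l (𝓝 x) →
      Tendsto (fun i => (- mink x u₃) • g (w * Real.log (ts i))) l (𝓝 x) := by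
    intro α l ts ρ x hts hx
    have hmem : ∀ᶠ i in l, ts i ∈ Set.Ioo (0:ℝ) b := hts (Ioo_mem_nhdsGT hb)
    have hd := hdiff.comp hts
    have hx' : Tendsto (fun i => (ρ i * (ts i / w)) • G (ts i)) l (𝓝 x) := by
      refine hx.congr' ?_
      filter_upwards [hmem] with i hi
      rw [hγ _ hi, smul_smul]
    set σ : α → ℝ := fun i => ρ i * (ts i / w) with hσ
    have hGu : Tendsto (fun i => mink (G (ts i)) u₃) l (𝓝 (-1)) := by
      have := (mink_tendsto hd (tendsto_const_nhds (x := u₃))).add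
        (tendsto_const_nhds (x := (-1:ℝ)))
      have h0 : mink (0 : E n) u₃ = 0 := by simp [mink]
      rw [h0, zero_add] at this
      refine this.congr fun i => ?_
      simp only [Function.comp]
      rw [← hgu (w * Real.log (ts i)), ← mink_add_left, sub_add_cancel]
    have hσu : Tendsto (fun i => σ i * mink (G (ts i)) u₃) l (𝓝 (mink x u₃)) := by
      refine (mink_tendsto hx' (tendsto_const_nhds (x := u₃))).congr fun i => ?_
      rw [mink_smul_left]
    have hσl : Tendsto σ l (𝓝 (- mink x u₃)) := by
      have := hσu.div hGu (by norm_num)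
      rw [div_neg, div_one] at this
      refine this.congr' ?_
      filter_upwards [hGu.eventually_ne (by norm_num : (-1:ℝ) ≠ 0)] with i hi
      simp only [Pi.div_apply]
      rw [mul_div_cancel_right₀ _ hi]
    -- g bounded
    have h1 : Tendsto (fun i => σ i • (G (ts i) - g (w * Real.log (ts i)))) l (𝓝 0) := by
      simpa using hσl.smul hd
    have h2 : Tendsto (fun i => (σ i - (- mink x u₃)) • g (w * Real.log (ts i))) l (𝓝 0) := by
      have : Tendsto (fun i => ‖σ i - (- mink x u₃)‖ * (‖u₃‖ + (‖u₁‖ + ‖u₂‖))) l (𝓝 0) := by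
        have := (tendsto_zero_iff_norm_tendsto_zero.1
          (by simpa using hσl.sub_const (- mink x u₃) :
            Tendsto (fun i => σ i - (- mink x u₃)) l (𝓝 0))).mul_const (‖u₃‖ + (‖u₁‖ + ‖u₂‖))
        simpa using this
      refine squeeze_zero_norm (fun i => ?_) this
      rw [norm_smul]
      gcongr
      refine (norm_add_le _ _).trans ?_
      gcongr
      refine (norm_add_le _ _).trans ?_
      rw [norm_smul, norm_smul]
      gcongr
      · exact mul_le_of_le_one_left (norm_nonneg _) (Real.abs_cos_le_one _)
      · exact mul_le_of_le_one_left (norm_nonneg _) (Real.abs_sin_le_one _)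
    have h3 := (hx'.sub h1).sub h2
    simp only [sub_zero] at h3
    refine h3.congr fun i => ?_
    simp only [smul_sub, sub_smul]; abel
  -- sequences
  have seq : ∀ φ : ℝ, ∃ ts : ℕ → ℝ, (∀ i, ts i ∈ Set.Ioo (0:ℝ) b) ∧
      Tendsto ts atTop (𝓝 0) ∧ ∀ i, g (w * Real.log (ts i)) = g φ := by
    intro φ
    have hlim : Tendsto (fun i : ℕ => Real.exp ((φ - i * (2 * Real.pi)) / w)) atTop (𝓝 0) := by
      refine Real.tendsto_exp_atBot.comp ?_
      refine Tendsto.atBot_div_const hw ?_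
      refine tendsto_atBot_add_const_left _ φ ?_ |>.congr (fun i => (sub_eq_add_neg _ _).symm)
      refine tendsto_neg_atTop_atBot.comp ?_
      exact tendsto_natCast_atTop_atTop.atTop_mul_const Real.two_pi_pos
    obtain ⟨N, hN⟩ := eventually_atTop.1 (hlim.eventually (gt_mem_nhds hb))
    refine ⟨fun i => Real.exp ((φ - (i + N : ℕ) * (2 * Real.pi)) / w), fun i =>
      ⟨Real.exp_pos _, hN _ (by omega)⟩, ?_, fun i => ?_⟩
    · exact hlim.comp (tendsto_add_atTop_nat N)
    · rw [Real.log_exp, mul_div_cancel₀ _ hw.ne']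
      simp only [hg, Real.cos_sub_nat_mul_two_pi, Real.sin_sub_nat_mul_two_pi]
  refine ⟨?_, u₁, u₂, u₃, _, rfl, ?_, m11, m22, m33, m12, m13, m23, ?_⟩
  · rintro ⟨x, hx0, r, -, hr⟩
    have hx := conv (𝓝[>] 0) id r x tendsto_id hr
    have hφ : ∀ φ, x = (- mink x u₃) • g φ := by
      intro φ
      obtain ⟨ts, h1, h2, h3⟩ := seq φ
      have h4 : Tendsto ts atTop (𝓝[>] 0) :=
        tendsto_nhdsWithin_iff.2 ⟨h2, Eventually.of_forall fun i => (h1 i).1⟩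
      have h5 := hx.comp h4
      have h6 : ((fun i => -mink x u₃ • g (w * Real.log (id i))) ∘ ts) =
          fun _ => -mink x u₃ • g φ := by
        funext i; simp only [Function.comp, id, h3]
      rw [h6] at h5
      exact tendsto_nhds_unique h5 tendsto_const_nhds
    have e1 := congrArg (fun y => mink y u₁) (hφ 0)
    have e2 := congrArg (fun y => mink y u₁) (hφ Real.pi)
    simp only [hg, mink_add_left, mink_smul_left, m11, m21, m31, Real.cos_zero, Real.cos_pi,
      Real.sin_zero, Real.sin_pi] at e1 e2
    have e3 : mink x u₃ = 0 := by linarith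
    apply hx0
    rw [hφ 0, e3]; simp
  · have hli : LinearIndependent ℝ ![u₁, u₂, u₃] := by
      rw [Fintype.linearIndependent_iff]
      intro k hk
      simp only [Fin.sum_univ_three, Matrix.cons_val_zero, Matrix.cons_val_one,
        Matrix.cons_val] at hk
      have z0 : ∀ y : E n, mink 0 y = 0 := fun y => by simp [mink]
      have k1 := congrArg (fun y => mink y u₁) hk
      have k2 := congrArg (fun y => mink y u₂) hk
      have k3 := congrArg (fun y => mink y u₃) hk
      simp only [mink_add_left, mink_smul_left, z0, m11, m22, m33,
        m12, m13, m23, m31, m32, m21] at k1 k2 k3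
      intro i
      fin_cases i
      · show k 0 = 0
        linarith
      · show k 1 = 0
        linarith
      · show k 2 = 0
        linarith
    have hc := finrank_span_eq_card hli
    have hr : Set.range ![u₁, u₂, u₃] = {u₁, u₂, u₃} := by
      ext y; simp [Matrix.range_cons]; tauto
    rw [hr] at hc
    simpa using hc
  · intro x hx0
    constructor
    · rintro ⟨ts, rs, h1, h2, h3⟩
      have h4 : Tendsto ts atTop (𝓝[>] 0) :=
        tendsto_nhdsWithin_iff.2 ⟨h2, Eventually.of_forall fun i => (h1 i).1⟩
      have h5 := conv atTop ts rs x h4 h3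
      constructor
      · have hcl : IsClosed ((Submodule.span ℝ ({u₁, u₂, u₃} : Set (E n)) : Submodule ℝ (E n)) : Set (E n)) :=
          Submodule.closed_of_finiteDimensional _
        refine hcl.mem_of_tendsto h5 (Eventually.of_forall fun i => ?_)
        refine Submodule.smul_mem _ _ (Submodule.add_mem _ ?_ (Submodule.add_mem _
          (Submodule.smul_mem _ _ ?_) (Submodule.smul_mem _ _ ?_))) <;>
        exact Submodule.subset_span (by simp)
      · refine tendsto_nhds_unique (mink_tendsto h5 h5) ?_
        simp only [mink_smul_left, mink_smul_right, hgg, mul_zero]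
        exact tendsto_const_nhds
    · rintro ⟨hxW, hxx⟩
      rw [Submodule.mem_span_triple] at hxW
      obtain ⟨α, β, δ, rfl⟩ := hxW
      simp only [mink_add_left, mink_smul_left, mink_add_right, mink_smul_right, m11, m22, m33,
        m12, m13, m23, m31, m32, m21] at hxx
      have hδ : δ ≠ 0 := by
        rintro rfl
        have hα : α = 0 := by nlinarith [sq_nonneg α, sq_nonneg β]
        have hβ : β = 0 := by nlinarith [sq_nonneg α, sq_nonneg β]
        exact hx0 (by simp [hα, hβ])
      obtain ⟨φ, hc, hs⟩ : ∃ φ, Real.cos φ = α / δ ∧ Real.sin φ = β / δ := by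
        have hn : ‖(⟨α / δ, β / δ⟩ : ℂ)‖ = 1 := by
          rw [Complex.norm_def, Real.sqrt_eq_one, Complex.normSq_mk]
          field_simp; linarith
        have hne : (⟨α / δ, β / δ⟩ : ℂ) ≠ 0 := by
          intro h0; rw [h0] at hn; simp at hn
        refine ⟨Complex.arg ⟨α / δ, β / δ⟩, ?_, ?_⟩
        · rw [Complex.cos_arg hne, hn]; simp
        · rw [Complex.sin_arg, hn]; simp
      obtain ⟨ts, h1, h2, h3⟩ := seq φ
      have h4 : Tendsto ts atTop (𝓝[>] 0) :=
        tendsto_nhdsWithin_iff.2 ⟨h2, Eventually.of_forall fun i => (h1 i).1⟩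
      refine ⟨ts, fun i => δ * (w / ts i), h1, h2, ?_⟩
      have h5 : Tendsto (fun i => δ • ((G (ts i) - g (w * Real.log (ts i))) + g φ)) atTop
          (𝓝 (δ • (0 + g φ))) := ((hdiff.comp h4).add_const _).const_smul δ
      have h6 : δ • (0 + g φ) = α • u₁ + β • u₂ + δ • u₃ := by
        simp only [hg, hc, hs, zero_add, smul_add, smul_smul, mul_div_cancel₀ _ hδ]
        abel
      rw [h6] at h5
      refine h5.congr fun i => ?_
      have hti := (h1 i).1.ne'
      rw [h3, sub_add_cancel, hγ _ (h1 i), smul_smul]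
      congr 1
      field_simp

lemma mink_sub_right {n : ℕ} (v x y : E n) : mink v (x - y) = mink v x - mink v y := by
  rw [mink_eq, mink_eq, mink_eq, inner_sub_right]

lemma mink_sub_left {n : ℕ} (v x y : E n) : mink (x - y) v = mink x v - mink y v := by
  rw [mink_comm, mink_sub_right, mink_comm v, mink_comm v]

lemma vec_lim {n : ℕ} (F : ℝ → E n)
    (h : ∀ y : E n, ∃ l : ℝ, Tendsto (fun t => (inner ℝ y (F t) : ℝ)) (𝓝[>] 0) (𝓝 l)) :
    ∃ L, Tendsto F (𝓝[>] 0) (𝓝 L) := by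
  choose l hl using h
  refine ⟨∑ i, l (EuclideanSpace.basisFun _ ℝ i) • EuclideanSpace.basisFun _ ℝ i, ?_⟩
  have e : F = fun t => ∑ i, (inner ℝ (EuclideanSpace.basisFun (Fin (n + 2)) ℝ i) (F t) : ℝ) •
      EuclideanSpace.basisFun _ ℝ i := by
    funext t
    exact ((EuclideanSpace.basisFun (Fin (n + 2)) ℝ).sum_repr' (F t)).symm
  rw [e]
  exact tendsto_finsetSum _ fun i _ => (hl _).smul_const _

lemma bdd_mul_zero {k d : ℝ → ℝ} (hk : ∀ t, |k t| ≤ 1) (hd : Tendsto d (𝓝[>] 0) (𝓝 0)) :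
    Tendsto (fun t => k t * d t) (𝓝[>] 0) (𝓝 0) := by
  refine squeeze_zero_norm (fun t => ?_) (tendsto_zero_iff_norm_tendsto_zero.1 hd)
  rw [norm_mul]
  exact mul_le_of_le_one_left (norm_nonneg _) (hk t)

/-- Theorem 5.4: for 1−2λ < 0 the Calapso transform has no limit point
at 0 but a limit circle. -/
theorem stmt16 {n : ℕ} (ε b : ℝ) (hε : 0 < ε) (hb : 0 < b)
    (c : ℝ → E n) (hc : ContDiffOn ℝ (⊤ : ℕ∞) c (Set.Ioo (-ε) b))
    (hcnull : ∀ t ∈ Set.Ioo (-ε) b, mink (c t) (c t) = 0)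
    (hcne : ∀ t ∈ Set.Ioo (-ε) b, c t ≠ 0)
    (hcreg : ∀ t ∈ Set.Ioo (-ε) b, mink (deriv c t) (deriv c t) = 1)
    (lam : ℝ) (hlam : 1 < 2 * lam)
    (p : ℝ) (hp : p ∈ Set.Ioo (0:ℝ) b)
    (T : ℝ → E n →L[ℝ] E n) (hTp : T p = 1)
    (hT : ∀ t ∈ Set.Ioo (0:ℝ) b,
      HasDerivAt T ((lam / t ^ 2) • (T t * wedge (c t) (deriv c t))) t) :
    (¬ ∃ x : E n, x ≠ 0 ∧ ∃ r : ℝ → ℝ, (∀ t ∈ Set.Ioo (0:ℝ) b, r t ≠ 0) ∧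
        Tendsto (fun t : ℝ => r t • (T t) (c t)) (𝓝[>] 0) (𝓝 x)) ∧
    ∃ (u₁ u₂ u₃ : E n) (W : Submodule ℝ (E n)),
      W = Submodule.span ℝ ({u₁, u₂, u₃} : Set (E n)) ∧
      Module.finrank ℝ W = 3 ∧
      mink u₁ u₁ = 1 ∧ mink u₂ u₂ = 1 ∧ mink u₃ u₃ = -1 ∧
      mink u₁ u₂ = 0 ∧ mink u₁ u₃ = 0 ∧ mink u₂ u₃ = 0 ∧
      ∀ x : E n, x ≠ 0 →
        (projAccum b (fun t => (T t) (c t)) x ↔ (x ∈ W ∧ mink x x = 0)) := by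
  set I := Set.Ioo (-ε) b with hI
  have hIo : IsOpen I := isOpen_Ioo
  have h0I : (0:ℝ) ∈ I := ⟨by linarith, hb⟩
  have hsub : ∀ t ∈ Set.Ioo (0:ℝ) b, t ∈ I := fun t ht => ⟨by linarith [ht.1], ht.2⟩
  set c1 := deriv c with hc1
  set c2 := deriv c1 with hc2
  set c3 := deriv c2 with hc3
  have s1 : ContDiffOn ℝ (⊤ : ℕ∞) c1 I := hc.deriv_of_isOpen hIo (by simp)
  have s2 : ContDiffOn ℝ (⊤ : ℕ∞) c2 I := s1.deriv_of_isOpen hIo (by simp)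
  have s3 : ContDiffOn ℝ (⊤ : ℕ∞) c3 I := s2.deriv_of_isOpen hIo (by simp)
  have hda : ∀ f : ℝ → E n, ContDiffOn ℝ (⊤ : ℕ∞) f I → ∀ t ∈ I, HasDerivAt f (deriv f t) t := by
    intro f hf t ht
    exact ((hf.differentiableOn (by simp)).differentiableAt (hIo.mem_nhds ht)).hasDerivAt
  have d0 := hda c hc
  have d1 := hda c1 s1
  have d2 := hda c2 s2
  rw [← hc1] at d0
  rw [← hc2] at d1
  rw [← hc3] at d2
  -- frame identities
  have uniq : ∀ (F : ℝ → ℝ) (k : ℝ), (∀ t ∈ I, F t = k) → ∀ t ∈ I, ∀ F', HasDerivAt F F' t →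
      F' = 0 := by
    intro F k hF t ht F' hF'
    have : HasDerivAt F 0 t := (hasDerivAt_const t k).congr_of_eventuallyEq
      (by filter_upwards [hIo.mem_nhds ht] with s hs using hF s hs)
    exact hF'.unique this
  have m01 : ∀ t ∈ I, mink (c t) (c1 t) = 0 := by
    intro t ht
    have := uniq _ 0 hcnull t ht _ (mink_deriv (d0 t ht) (d0 t ht))
    rw [mink_comm (c1 t)] at this
    linarith
  have m02 : ∀ t ∈ I, mink (c t) (c2 t) = -1 := by
    intro t ht
    have := uniq _ 0 m01 t ht _ (mink_deriv (d0 t ht) (d1 t ht))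
    rw [hcreg t ht] at this
    linarith
  have m12 : ∀ t ∈ I, mink (c1 t) (c2 t) = 0 := by
    intro t ht
    have := uniq _ 1 hcreg t ht _ (mink_deriv (d1 t ht) (d1 t ht))
    rw [mink_comm (c2 t)] at this
    linarith
  have iso := T_isom b c c1 (fun t => lam / t ^ 2) p hp T hTp hT
  -- derivatives
  have dT : ∀ f f' : ℝ → E n, ∀ t ∈ Set.Ioo (0:ℝ) b, HasDerivAt f (f' t) t →
      HasDerivAt (fun t => T t (f t)) (T t (f' t) + (lam / t ^ 2) •
        (mink (c t) (f t) • T t (c1 t) - mink (c1 t) (f t) • T t (c t))) t := by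
    intro f f' t ht hf
    refine ((hT t ht).clm_apply hf).congr_deriv ?_
    simp only [smul_apply, mul_apply_eq_comp, wedge_apply, map_sub, map_smul]
    abel
  have dT0 : ∀ t ∈ Set.Ioo (0:ℝ) b, HasDerivAt (fun t => T t (c t)) (T t (c1 t)) t := by
    intro t ht
    have hi := hsub t ht
    refine (dT c c1 t ht (d0 t hi)).congr_deriv ?_
    rw [hcnull t hi, mink_comm, m01 t hi]; simp
  have dT1 : ∀ t ∈ Set.Ioo (0:ℝ) b, HasDerivAt (fun t => T t (c1 t))
      (T t (c2 t) - (lam / t ^ 2) • T t (c t)) t := by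
    intro t ht
    have hi := hsub t ht
    refine (dT c1 c2 t ht (d1 t hi)).congr_deriv ?_
    rw [hcreg t hi, m01 t hi]; simp [sub_eq_add_neg]
  have dT2 : ∀ t ∈ Set.Ioo (0:ℝ) b, HasDerivAt (fun t => T t (c2 t))
      (T t (c3 t) - (lam / t ^ 2) • T t (c1 t)) t := by
    intro t ht
    have hi := hsub t ht
    refine (dT c2 c3 t ht (d2 t hi)).congr_deriv ?_
    rw [m02 t hi, m12 t hi]; simp [sub_eq_add_neg]
  -- bounds
  have hKI : Set.Icc 0 p ⊆ I := fun t ht => ⟨by linarith [ht.1], by linarith [ht.2, hp.2]⟩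
  have bd : ∀ f : ℝ → E n, ContDiffOn ℝ (⊤ : ℕ∞) f I → ∃ K, ∀ t ∈ Set.Icc 0 p, ‖f t‖ ≤ K :=
    fun f hf => isCompact_Icc.exists_bound_of_continuousOn (hf.continuousOn.mono hKI)
  obtain ⟨K0, hK0⟩ := bd c hc
  obtain ⟨K1, hK1⟩ := bd c1 s1
  obtain ⟨K3, hK3⟩ := bd c3 s3
  have hpm : (0:ℝ) ∈ Set.Icc 0 p := ⟨le_refl _, hp.1.le⟩
  have hK0' := (norm_nonneg _).trans (hK0 0 hpm)
  have hK1' := (norm_nonneg _).trans (hK1 0 hpm)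
  have hK3' := (norm_nonneg _).trans (hK3 0 hpm)
  have hlam0 : 0 < lam := by linarith
  set w := √(2 * lam - 1) with hw
  have hw0 : 0 < w := Real.sqrt_pos.2 (by linarith)
  have hwl : w ^ 2 = 2 * lam - 1 := Real.sq_sqrt (by linarith)
  set Jn := ‖(Jm : E n →L[ℝ] E n)‖ with hJn
  have hJn0 : 0 ≤ Jn := norm_nonneg _
  set C := 2 * lam * Jn * (K0 + K1) + K3 with hC
  have hIoc : ∀ t ∈ Set.Ioc (0:ℝ) p, t ∈ Set.Ioo (0:ℝ) b := fun t ht =>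
    ⟨ht.1, ht.2.trans_lt hp.2⟩
  have inn : ∀ (y : E n) (f : ℝ → E n) (f' : E n) (t : ℝ), HasDerivAt f f' t →
      HasDerivAt (fun t => (inner ℝ y (f t) : ℝ)) (inner ℝ y f') t := by
    intro y f f' t hf
    simpa using (hasDerivAt_const t y).inner ℝ hf
  have hkey := fun y : E n => key p lam w C hp.1 hw0 hwl (by positivity)
    (fun t => inner ℝ y (T t (c t))) (fun t => inner ℝ y (T t (c1 t)))
    (fun t => inner ℝ y (T t (c2 t))) (fun t => inner ℝ y (T t (c3 t)))
    (fun t => ‖ContinuousLinearMap.adjoint (T t) y‖) _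
    (fun t ht => inn y _ _ t (dT0 t (hIoc t ht)))
    (fun t ht => (inn y _ _ t (dT1 t (hIoc t ht))).congr_deriv
      (by rw [inner_sub_right, inner_smul_right]))
    (fun t ht => (inn y _ _ t (dT2 t (hIoc t ht))).congr_deriv
      (by rw [inner_sub_right, inner_smul_right]))
    (fun t ht => (adj_deriv (hT t (hIoc t ht)) y).norm_sq)
    (fun t => norm_nonneg _)
    (by
      intro t ht
      have htI : t ∈ Set.Icc 0 p := ⟨ht.1.le, ht.2⟩
      have ht0 := ht.1
      simp only [ContinuousLinearMap.adjoint_inner_left]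
      set z := ContinuousLinearMap.adjoint (T t) y with hz
      set a0 : ℝ := inner ℝ y (T t (c t))
      set a1 : ℝ := inner ℝ y (T t (c1 t))
      rw [abs_mul, abs_two]
      have e1 : ‖a1 • Jm (c t) - a0 • Jm (c1 t)‖ ≤ (Jn * (K0 + K1)) * (|a0| + |a1|) := by
        have q0 : ‖Jm (c t)‖ ≤ Jn * K0 := (Jm.le_opNorm _).trans (by gcongr; exact hK0 t htI)
        have q1 : ‖Jm (c1 t)‖ ≤ Jn * K1 := (Jm.le_opNorm _).trans (by gcongr; exact hK1 t htI)
        calc _ ≤ |a1| * ‖Jm (c t)‖ + |a0| * ‖Jm (c1 t)‖ := by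
              refine (norm_sub_le _ _).trans ?_
              rw [norm_smul, norm_smul]; rfl
          _ ≤ |a1| * (Jn * K0) + |a0| * (Jn * K1) := by gcongr
          _ ≤ _ := by
              have r1 : 0 ≤ |a0| * (Jn * K0) := by positivity
              have r2 : 0 ≤ |a1| * (Jn * K1) := by positivity
              nlinarith
      have e2 : |(inner ℝ z ((lam / t ^ 2) • (a1 • Jm (c t) - a0 • Jm (c1 t))) : ℝ)| ≤
          ‖z‖ * (lam / t ^ 2 * ((Jn * (K0 + K1)) * (|a0| + |a1|))) := by
        refine (abs_real_inner_le_norm _ _).trans ?_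
        rw [norm_smul, Real.norm_of_nonneg (by positivity)]
        gcongr
      calc _ ≤ 2 * (‖z‖ * (lam / t ^ 2 * ((Jn * (K0 + K1)) * (|a0| + |a1|)))) := by
            rw [← ContinuousLinearMap.adjoint_inner_left]
            exact mul_le_mul_of_nonneg_left e2 zero_le_two
        _ = (2 * lam * Jn * (K0 + K1)) / t ^ 2 * ‖z‖ * (|a0| + |a1|) := by ring
        _ ≤ C / t ^ 2 * ‖z‖ * (|a0| + |a1|) := by
            gcongr
            linarith)
    (by
      intro t ht
      have htI : t ∈ Set.Icc 0 p := ⟨ht.1.le, ht.2⟩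
      rw [← ContinuousLinearMap.adjoint_inner_left]
      refine (abs_real_inner_le_norm _ _).trans ?_
      rw [mul_comm]
      gcongr
      refine (hK3 t htI).trans ?_
      have : 0 ≤ 2 * lam * Jn * (K0 + K1) := by positivity
      linarith)
  -- vector quantities
  set hv : ℝ → E n := fun t => (lam / t) • T t (c t) - T t (c1 t) + t • T t (c2 t) with hhv
  set B : ℝ → E n := fun t => (w / t) • T t (c t) - (1 / w) • hv t with hB
  set f : ℝ → E n := fun t => T t (c1 t) - (1 / t) • T t (c t) with hf
  set P : ℝ → E n := fun t => Real.cos (w * Real.log t) • B t - Real.sin (w * Real.log t) • f t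
    with hP
  set Q : ℝ → E n := fun t => Real.sin (w * Real.log t) • B t + Real.cos (w * Real.log t) • f t
    with hQ
  obtain ⟨H0, hH0⟩ : ∃ L, Tendsto hv (𝓝[>] 0) (𝓝 L) := by
    refine vec_lim _ fun y => ?_
    obtain ⟨l, hl⟩ := (hkey y).1
    refine ⟨l, hl.congr fun t => ?_⟩
    simp only [hhv, inner_add_right, inner_sub_right, inner_smul_right]
    ring
  obtain ⟨P0, hP0⟩ : ∃ L, Tendsto P (𝓝[>] 0) (𝓝 L) := by
    refine vec_lim _ fun y => ?_
    obtain ⟨l, hl⟩ := (hkey y).2.1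
    refine ⟨l, hl.congr fun t => ?_⟩
    simp only [hP, hB, hf, hhv, inner_add_right, inner_sub_right, inner_smul_right]
    ring
  obtain ⟨Q0, hQ0⟩ : ∃ L, Tendsto Q (𝓝[>] 0) (𝓝 L) := by
    refine vec_lim _ fun y => ?_
    obtain ⟨l, hl⟩ := (hkey y).2.2
    refine ⟨l, hl.congr fun t => ?_⟩
    simp only [hQ, hB, hf, hhv, inner_add_right, inner_sub_right, inner_smul_right]
    ring
  -- Minkowski products
  set δ : ℝ → ℝ := fun t => t ^ 2 * mink (c2 t) (c2 t) with hδ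
  have hδ0 : Tendsto δ (𝓝[>] 0) (𝓝 0) := by
    have h1 : ContinuousAt c2 0 := (d2 0 h0I).continuousAt
    have h2 : Tendsto δ (𝓝 0) (𝓝 ((0:ℝ) ^ 2 * mink (c2 0) (c2 0))) :=
      ((continuous_pow 2).tendsto (0:ℝ)).mul (mink_tendsto h1 h1)
    simp only [ne_eq, OfNat.ofNat_ne_zero, not_false_eq_true, zero_pow, zero_mul] at h2
    exact h2.mono_left nhdsWithin_le_nhds
  have hlw : lam = (w ^ 2 + 1) / 2 := by linarith
  have prods : ∀ t ∈ Set.Ioo (0:ℝ) b, mink (hv t) (hv t) = - w ^ 2 + δ t ∧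
      mink (hv t) (B t) = - (δ t / w) ∧ mink (hv t) (f t) = 0 ∧
      mink (B t) (B t) = 1 + δ t / w ^ 2 ∧ mink (B t) (f t) = 0 ∧ mink (f t) (f t) = 1 := by
    intro t ht
    have hi := hsub t ht
    have ht0 : t ≠ 0 := ht.1.ne'
    have n00 : mink (T t (c t)) (T t (c t)) = 0 := by rw [iso t ht, hcnull t hi]
    have n01 : mink (T t (c t)) (T t (c1 t)) = 0 := by rw [iso t ht, m01 t hi]
    have n10 : mink (T t (c1 t)) (T t (c t)) = 0 := by rw [mink_comm, n01]
    have n02 : mink (T t (c t)) (T t (c2 t)) = -1 := by rw [iso t ht, m02 t hi]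
    have n20 : mink (T t (c2 t)) (T t (c t)) = -1 := by rw [mink_comm, n02]
    have n11 : mink (T t (c1 t)) (T t (c1 t)) = 1 := by rw [iso t ht, hcreg t hi]
    have n12 : mink (T t (c1 t)) (T t (c2 t)) = 0 := by rw [iso t ht, m12 t hi]
    have n21 : mink (T t (c2 t)) (T t (c1 t)) = 0 := by rw [mink_comm, n12]
    have n22 : mink (T t (c2 t)) (T t (c2 t)) = mink (c2 t) (c2 t) := iso t ht _ _
    refine ⟨?_, ?_, ?_, ?_, ?_, ?_⟩ <;>
    simp only [hB, hf, hhv, hδ, mink_add_left, mink_add_right, mink_sub_left, mink_sub_right,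
      mink_smul_left, mink_smul_right, n00, n01, n02, n10, n11, n12, n20, n21, n22, hlw] <;>
    field_simp <;> ring
  have ev : ∀ᶠ t in 𝓝[>] (0:ℝ), t ∈ Set.Ioo (0:ℝ) b := Ioo_mem_nhdsGT hb
  have co : ∀ t : ℝ, |Real.cos (w * Real.log t)| ≤ 1 := fun t => Real.abs_cos_le_one _
  have si : ∀ t : ℝ, |Real.sin (w * Real.log t)| ≤ 1 := fun t => Real.abs_sin_le_one _
  have hδw : ∀ k : ℝ, Tendsto (fun t => δ t / k) (𝓝[>] 0) (𝓝 0) := fun k => by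
    simpa using hδ0.div_const k
  -- generic limit comparison
  have lims : ∀ (X Y : ℝ → E n) (x y : E n) (a : ℝ) (r : ℝ → ℝ), Tendsto X (𝓝[>] 0) (𝓝 x) →
      Tendsto Y (𝓝[>] 0) (𝓝 y) → Tendsto r (𝓝[>] 0) (𝓝 0) →
      (∀ t ∈ Set.Ioo (0:ℝ) b, mink (X t) (Y t) = a + r t) → mink x y = a := by
    intro X Y x y a r hX hY hr h
    refine tendsto_nhds_unique (mink_tendsto hX hY) ?_
    have : Tendsto (fun t => a + r t) (𝓝[>] 0) (𝓝 (a + 0)) := hr.const_add a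
    rw [add_zero] at this
    refine this.congr' ?_
    filter_upwards [ev] with t ht
    exact (h t ht).symm
  have l33 : mink H0 H0 = - w ^ 2 := lims hv hv _ _ _ δ hH0 hH0 hδ0 fun t ht => (prods t ht).1
  have l11 : mink P0 P0 = 1 := by
    refine lims P P _ _ _ (fun t => Real.cos (w * Real.log t) * (Real.cos (w * Real.log t) *
      (δ t / w ^ 2))) hP0 hP0 (bdd_mul_zero co (bdd_mul_zero co (hδw _))) fun t ht => ?_
    obtain ⟨q1, q2, q3, q4, q5, q6⟩ := prods t ht
    simp only [hP, mink_sub_left, mink_sub_right, mink_smul_left, mink_smul_right, q4, q5, q6,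
      mink_comm (f t) (B t)]
    linear_combination Real.sin_sq_add_cos_sq (w * Real.log t)
  have l22 : mink Q0 Q0 = 1 := by
    refine lims Q Q _ _ _ (fun t => Real.sin (w * Real.log t) * (Real.sin (w * Real.log t) *
      (δ t / w ^ 2))) hQ0 hQ0 (bdd_mul_zero si (bdd_mul_zero si (hδw _))) fun t ht => ?_
    obtain ⟨q1, q2, q3, q4, q5, q6⟩ := prods t ht
    simp only [hQ, mink_add_left, mink_add_right, mink_smul_left, mink_smul_right, q4, q5, q6,
      mink_comm (f t) (B t)]
    linear_combination Real.sin_sq_add_cos_sq (w * Real.log t)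
  have l12 : mink P0 Q0 = 0 := by
    refine lims P Q _ _ _ (fun t => Real.cos (w * Real.log t) * (Real.sin (w * Real.log t) *
      (δ t / w ^ 2))) hP0 hQ0 (bdd_mul_zero co (bdd_mul_zero si (hδw _))) fun t ht => ?_
    obtain ⟨q1, q2, q3, q4, q5, q6⟩ := prods t ht
    simp only [hP, hQ, mink_add_right, mink_sub_left, mink_smul_left, mink_smul_right, q4, q5, q6,
      mink_comm (f t) (B t)]
    ring
  have l13 : mink P0 H0 = 0 := by
    rw [mink_comm]
    refine lims hv P _ _ _ (fun t => Real.cos (w * Real.log t) * (δ t / (-w))) hH0 hP0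
      (bdd_mul_zero co (hδw _)) fun t ht => ?_
    obtain ⟨q1, q2, q3, q4, q5, q6⟩ := prods t ht
    simp only [hP, mink_sub_right, mink_smul_right, q2, q3, div_neg]
    ring
  have l23 : mink Q0 H0 = 0 := by
    rw [mink_comm]
    refine lims hv Q _ _ _ (fun t => Real.sin (w * Real.log t) * (δ t / (-w))) hH0 hQ0
      (bdd_mul_zero si (hδw _)) fun t ht => ?_
    obtain ⟨q1, q2, q3, q4, q5, q6⟩ := prods t ht
    simp only [hQ, mink_add_right, mink_smul_right, q2, q3, div_neg]
    ring
  refine endgame b w hb hw0 (fun t => T t (c t)) (fun t => (1 / w) • hv t) P Q P0 Q0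
    ((1 / w) • H0) (hH0.const_smul _) hP0 hQ0 l11 l22 ?_ l12 ?_ ?_ ?_
  · rw [mink_smul_left, mink_smul_right, l33]; field_simp
  · rw [mink_smul_right, l13, mul_zero]
  · rw [mink_smul_right, l23, mul_zero]
  · intro t ht
    have ht0 : t ≠ 0 := ht.1.ne'
    have e1 : Real.cos (w * Real.log t) • P t + Real.sin (w * Real.log t) • Q t = B t := by
      have e : Real.cos (w * Real.log t) • P t + Real.sin (w * Real.log t) • Q t =
          (Real.sin (w * Real.log t) ^ 2 + Real.cos (w * Real.log t) ^ 2) • B t := by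
        simp only [hP, hQ]; module
      rw [e, Real.sin_sq_add_cos_sq, one_smul]
    rw [e1]
    simp only [hB]
    rw [add_sub_cancel, smul_smul]
    have : t / w * (w / t) = 1 := by field_simp
    rw [this, one_smul]
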